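/- For every integer t ≥ 3, Λ(t) = max{ n ∈ ℕ : C(n,3) ≤ t }. Equivalently, for every integer n ≥ 3, if C(n,3) ≤ t < C(n+1,3), then Λ(t) = n. -/

import Mathlib

open Finset Matrix

/-- The sign `[T : e]` of an edge `e` in a triangle `T`. -/
noncomputable def triSign (T e : Finset ℕ) : ℝ :=
  if e ⊆ T ∧ e.card = 2 ∧ T.card = 3 then
    if (T \ e).max = T.max ∨ (T \ e).min = T.min then 1 else -1
  else 0

/-- A triangle family: a nonempty finite set of 3-element subsets of ℕ. -/
def IsTriFam (F : Finset (Finset ℕ)) : Prop :=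
  F.Nonempty ∧ ∀ T ∈ F, T.card = 3

/-- The edges of the support graph of a triangle family. -/
def edgesOf (F : Finset (Finset ℕ)) : Finset (Finset ℕ) :=
  F.biUnion fun T => T.powersetCard 2

/-- The vertices of the support graph of a triangle family. -/
def vertsOf (F : Finset (Finset ℕ)) : Finset ℕ :=
  F.biUnion id

/-- The signed edge-triangle incidence matrix of a triangle family. -/
noncomputable def delta1 (F : Finset (Finset ℕ)) :
    Matrix {T // T ∈ F} {e // e ∈ edgesOf F} ℝ :=
  Matrix.of fun T e => triSign T.1 e.1

/-- The smallest positive eigenvalue of a matrix. -/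
noncomputable def lambdaMinPos {m : Type*} [Fintype m] (M : Matrix m m ℝ) : ℝ :=
  sInf {μ : ℝ | 0 < μ ∧ ∃ v : m → ℝ, v ≠ 0 ∧ M.mulVec v = μ • v}

/-- `λ(𝒯)`: the smallest positive eigenvalue of `δ₁(𝒯)ᵀ δ₁(𝒯)`. -/
noncomputable def lam (F : Finset (Finset ℕ)) : ℝ :=
  lambdaMinPos ((delta1 F)ᵀ * delta1 F)

/-- The neighborhood of `x` in the support graph `Γ₀(F)`. -/
def nbrs (F : Finset (Finset ℕ)) (x : ℕ) : Finset ℕ :=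
  (vertsOf F).filter fun y => x ≠ y ∧ ∃ T ∈ F, x ∈ T ∧ y ∈ T

/-- `φ(t)`: the maximum of `λ(𝒯)` over triangle families with `|𝒯| = t`. -/
noncomputable def phi (t : ℕ) : ℝ :=
  sSup {r : ℝ | ∃ F : Finset (Finset ℕ), IsTriFam F ∧ F.card = t ∧ lam F = r}

/-- `Λ(t) = max_{1 ≤ s ≤ t} φ(s)`. -/
noncomputable def Lam (t : ℕ) : ℝ :=
  sSup {r : ℝ | ∃ s : ℕ, 1 ≤ s ∧ s ≤ t ∧ phi s = r}

/-- `H(n) = min{ s ≥ 1 : φ(C(n,3)+s) > n - 1 }`. -/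
noncomputable def Hfun (n : ℕ) : ℕ :=
  sInf {s : ℕ | 1 ≤ s ∧ (n : ℝ) - 1 < phi (n.choose 3 + s)}

/-- The triangle family `𝒯_{c,b}`: all 3-cliques of `K_c ∨ (b isolated vertices)`. -/
def Tcb (c b : ℕ) : Finset (Finset ℕ) :=
  ((Finset.Icc 1 c).powersetCard 3) ∪
    (Finset.Icc (c+1) (c+b)).biUnion
      (fun i => ((Finset.Icc 1 c).powersetCard 2).image (fun p => insert i p))

lemma spec_entry {m : Type*} [Fintype m] [DecidableEq m] (M : Matrix m m ℝ)
    (hM : M.PosSemidef) (e : m) :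
    ∃ μ c : m → ℝ, (∀ i, 0 ≤ μ i) ∧
      (∀ i, ∃ v : m → ℝ, v ≠ 0 ∧ M.mulVec v = μ i • v) ∧ (∀ i, 0 ≤ c i) ∧
      M e e = ∑ i, μ i * c i ∧ (M * M) e e = ∑ i, μ i ^ 2 * c i := by
  have hH := hM.1
  have hs := hH.spectral_theorem
  rw [Unitary.conjStarAlgAut_apply] at hs
  have hs2 : M * M = (hH.eigenvectorUnitary : Matrix m m ℝ) *
      Matrix.diagonal (fun i => hH.eigenvalues i ^ 2) *
      (star hH.eigenvectorUnitary : Matrix m m ℝ) := by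
    have hu : (star hH.eigenvectorUnitary : Matrix m m ℝ) * (hH.eigenvectorUnitary : Matrix m m ℝ) = 1 :=
      Unitary.coe_star_mul_self _
    conv_lhs => rw [hs]
    have : Matrix.diagonal (fun i => hH.eigenvalues i ^ 2) =
      Matrix.diagonal (RCLike.ofReal ∘ hH.eigenvalues) * Matrix.diagonal (RCLike.ofReal (K := ℝ) ∘ hH.eigenvalues) := by
      rw [Matrix.diagonal_mul_diagonal]; congr 1; ext i; simp [sq]
    rw [this]
    simp only [Matrix.mul_assoc]
    congr 2
    rw [← Matrix.mul_assoc, hu, Matrix.one_mul]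
  refine ⟨hH.eigenvalues, fun i => (hH.eigenvectorBasis i e) ^ 2, hM.eigenvalues_nonneg, ?_,
    fun i => sq_nonneg _, ?_, ?_⟩
  · intro i
    refine ⟨_, ?_, hH.mulVec_eigenvectorBasis i⟩
    intro h
    apply hH.eigenvectorBasis.orthonormal.ne_zero i
    ext j
    exact congrFun h j
  · conv_lhs => rw [hs]
    rw [Matrix.mul_apply]
    refine Finset.sum_congr rfl fun i _ => ?_
    rw [Matrix.mul_diagonal]
    simp [Matrix.star_apply, Matrix.IsHermitian.eigenvectorUnitary_apply]
    ring
  · rw [hs2, Matrix.mul_apply]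
    refine Finset.sum_congr rfl fun i _ => ?_
    rw [Matrix.mul_diagonal]
    simp [Matrix.star_apply, Matrix.IsHermitian.eigenvectorUnitary_apply]
    ring

lemma psdM (F : Finset (Finset ℕ)) : ((delta1 F)ᵀ * delta1 F).PosSemidef := by
  have := Matrix.posSemidef_conjTranspose_mul_self (delta1 F)
  rwa [Matrix.conjTranspose_eq_transpose_of_trivial] at this

/-- `M² ≥ λ M` on diagonal entries. -/
lemma lam_mul_le (F : Finset (Finset ℕ)) (e : {e // e ∈ edgesOf F}) :
    lam F * ((delta1 F)ᵀ * delta1 F) e e ≤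
      (((delta1 F)ᵀ * delta1 F) * ((delta1 F)ᵀ * delta1 F)) e e := by
  obtain ⟨μ, c, h0, h1, hc, h2, h3⟩ := spec_entry _ (psdM F) e
  rw [h2, h3, Finset.mul_sum]
  refine Finset.sum_le_sum fun i _ => ?_
  rcases (h0 i).eq_or_lt with h | h
  · simp [← h]
  · have : lam F ≤ μ i := csInf_le ⟨0, fun x hx => hx.1.le⟩ ⟨h, h1 i⟩
    have := mul_le_mul_of_nonneg_right this (mul_nonneg h.le (hc i))
    nlinarith

lemma exists_pos_eig (F : Finset (Finset ℕ)) (e : {e // e ∈ edgesOf F})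
    (he : 0 < ((delta1 F)ᵀ * delta1 F) e e) :
    ∃ μ : ℝ, 0 < μ ∧ ∃ v : {e // e ∈ edgesOf F} → ℝ, v ≠ 0 ∧
      ((delta1 F)ᵀ * delta1 F).mulVec v = μ • v := by
  obtain ⟨μ, c, h0, h1, hc, h2, h3⟩ := spec_entry _ (psdM F) e
  rw [h2] at he
  obtain ⟨i, _, hi⟩ := Finset.exists_lt_of_sum_lt (s := Finset.univ) (f := fun _ => (0:ℝ))
    (g := fun i => μ i * c i) (by rw [Finset.sum_const_zero]; exact he)
  exact ⟨μ i, pos_of_mul_pos_left hi (hc i), h1 i⟩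

lemma triSign_sq (T e : Finset ℕ) :
    triSign T e ^ 2 = if e ⊆ T ∧ e.card = 2 ∧ T.card = 3 then 1 else 0 := by
  unfold triSign; split_ifs <;> simp

lemma card_of_edge {F : Finset (Finset ℕ)} {e : Finset ℕ} (he : e ∈ edgesOf F) : e.card = 2 := by
  simp only [edgesOf, Finset.mem_biUnion, Finset.mem_powersetCard] at he
  obtain ⟨_, _, _, h⟩ := he; exact h

lemma triSign_sq' {F : Finset (Finset ℕ)} (hF : IsTriFam F) (T : {T // T ∈ F})
    (e : {e // e ∈ edgesOf F}) :
    triSign T.1 e.1 ^ 2 = if e.1 ⊆ T.1 then 1 else 0 := by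
  rw [triSign_sq]; simp [card_of_edge e.2, hF.2 T.1 T.2]

lemma M_diag {F : Finset (Finset ℕ)} (hF : IsTriFam F) (e : {e // e ∈ edgesOf F}) :
    ((delta1 F)ᵀ * delta1 F) e e = ((F.filter fun T => e.1 ⊆ T).card : ℝ) := by
  rw [Matrix.mul_apply]
  simp only [Matrix.transpose_apply, delta1, Matrix.of_apply, ← sq, triSign_sq' hF]
  rw [Finset.univ_eq_attach, Finset.sum_attach F (fun T => if e.1 ⊆ T then (1:ℝ) else 0)]
  simp

lemma row_sq {F : Finset (Finset ℕ)} (hF : IsTriFam F) (T : {T // T ∈ F}) :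
    ∑ f : {e // e ∈ edgesOf F}, triSign T.1 f.1 ^ 2 = 3 := by
  simp only [triSign_sq' hF]
  rw [Finset.univ_eq_attach, Finset.sum_attach (edgesOf F) (fun f => if f ⊆ T.1 then (1:ℝ) else 0)]
  have : (edgesOf F).filter (fun f => f ⊆ T.1) = T.1.powersetCard 2 := by
    ext f
    simp only [Finset.mem_filter, Finset.mem_powersetCard]
    constructor
    · rintro ⟨h1, h2⟩; exact ⟨h2, card_of_edge h1⟩
    · rintro ⟨h1, h2⟩
      refine ⟨?_, h1⟩
      simp only [edgesOf, Finset.mem_biUnion, Finset.mem_powersetCard]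
      exact ⟨T.1, T.2, h1, h2⟩
  rw [Finset.sum_boole, this, Finset.card_powersetCard, hF.2 T.1 T.2]
  norm_num [Nat.choose]

lemma uniq_tri {T T' e f : Finset ℕ} (hT : T.card = 3) (hT' : T'.card = 3) (he : e.card = 2)
    (hf : f.card = 2) (hef : e ≠ f) (h1 : e ⊆ T) (h2 : f ⊆ T) (h3 : e ⊆ T') (h4 : f ⊆ T') :
    T = T' := by
  have hc : 3 ≤ (e ∪ f).card := by
    have : e ⊂ e ∪ f := by
      refine Finset.ssubset_iff_subset_ne.2 ⟨Finset.subset_union_left, fun h => hef ?_⟩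
      have : f ⊆ e := by rw [h]; exact Finset.subset_union_right
      exact (Finset.eq_of_subset_of_card_le this (by omega)).symm
    have := Finset.card_lt_card this
    omega
  rw [← Finset.eq_of_subset_of_card_le (Finset.union_subset h1 h2) (by omega),
    Finset.eq_of_subset_of_card_le (Finset.union_subset h3 h4) (by omega)]

lemma M_off {F : Finset (Finset ℕ)} (hF : IsTriFam F) (e f : {e // e ∈ edgesOf F}) (hef : e ≠ f) :
    (((delta1 F)ᵀ * delta1 F) e f) ^ 2 = ∑ T : {T // T ∈ F}, triSign T.1 e.1 ^ 2 * triSign T.1 f.1 ^ 2 := by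
  have hne : e.1 ≠ f.1 := fun h => hef (Subtype.ext h)
  rw [Matrix.mul_apply]
  simp only [Matrix.transpose_apply, delta1, Matrix.of_apply]
  by_cases hex : ∃ T : {T // T ∈ F}, e.1 ⊆ T.1 ∧ f.1 ⊆ T.1
  · obtain ⟨T, hT1, hT2⟩ := hex
    have hz : ∀ T' : {T // T ∈ F}, T' ≠ T → triSign T'.1 e.1 * triSign T'.1 f.1 = 0 := by
      intro T' hT'
      by_contra hcon
      have h1 : e.1 ⊆ T'.1 := by
        by_contra h; apply hcon; simp [triSign, h]
      have h2 : f.1 ⊆ T'.1 := by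
        by_contra h; apply hcon; simp [triSign, h]
      exact hT' (Subtype.ext (uniq_tri (hF.2 _ T'.2) (hF.2 _ T.2) (card_of_edge e.2)
        (card_of_edge f.2) hne h1 h2 hT1 hT2))
    rw [Finset.sum_eq_single T (fun T' _ h => hz T' h) (by simp),
      Finset.sum_eq_single T (fun T' _ h => by rw [← mul_pow, hz T' h]; simp) (by simp), mul_pow]
  · have hz : ∀ T' : {T // T ∈ F}, triSign T'.1 e.1 * triSign T'.1 f.1 = 0 := by
      intro T'
      by_contra hcon
      apply hex
      refine ⟨T', ?_, ?_⟩
      · by_contra h; apply hcon; simp [triSign, h]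
      · by_contra h; apply hcon; simp [triSign, h]
    simp [← mul_pow, hz]

lemma M_sq_diag {F : Finset (Finset ℕ)} (hF : IsTriFam F) (e : {e // e ∈ edgesOf F}) :
    (((delta1 F)ᵀ * delta1 F) * ((delta1 F)ᵀ * delta1 F)) e e =
      ((F.filter fun T => e.1 ⊆ T).card : ℝ) ^ 2 + 2 * ((F.filter fun T => e.1 ⊆ T).card : ℝ) := by
  have hsym : ∀ f, ((delta1 F)ᵀ * delta1 F) f e = ((delta1 F)ᵀ * delta1 F) e f := fun f => by
    simp only [Matrix.mul_apply, Matrix.transpose_apply, mul_comm]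
  rw [Matrix.mul_apply]
  simp only [hsym, ← sq]
  rw [← Finset.add_sum_erase _ _ (Finset.mem_univ e), M_diag hF]
  congr 1
  rw [Finset.sum_congr rfl fun f hf => M_off hF e f (Finset.ne_of_mem_erase hf).symm,
    Finset.sum_comm]
  have : ∀ T : {T // T ∈ F}, ∑ f ∈ Finset.univ.erase e, triSign T.1 e.1 ^ 2 * triSign T.1 f.1 ^ 2
      = 2 * (if e.1 ⊆ T.1 then 1 else 0) := by
    intro T
    rw [← Finset.mul_sum]
    have h := row_sq hF T
    rw [← Finset.add_sum_erase _ _ (Finset.mem_univ e)] at h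
    rw [triSign_sq' hF] at h ⊢
    split_ifs at h ⊢ <;> linarith
  rw [Finset.sum_congr rfl fun T _ => this T, ← Finset.mul_sum,
    Finset.univ_eq_attach, Finset.sum_attach F (fun T => if e.1 ⊆ T then (1:ℝ) else 0)]
  simp

lemma edge_deg {F : Finset (Finset ℕ)} (hF : IsTriFam F) {n : ℕ} (hn : (n : ℝ) < lam F)
    {e : Finset ℕ} (he : e ∈ edgesOf F) : n ≤ (F.filter fun T => e ⊆ T).card + 1 := by
  have h := lam_mul_le F ⟨e, he⟩
  rw [M_sq_diag hF, M_diag hF] at h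
  have hpos : 0 < (F.filter fun T => e ⊆ T).card := by
    rw [Finset.card_pos]
    simp only [edgesOf, Finset.mem_biUnion, Finset.mem_powersetCard] at he
    obtain ⟨T, hT, hs, _⟩ := he
    exact ⟨T, by simp [hT, hs]⟩
  simp only at h
  set d := (F.filter fun T => e ⊆ T).card
  have hd : (0:ℝ) < d := by exact_mod_cast hpos
  have : lam F ≤ d + 2 := by
    by_contra hcon
    push Not at hcon
    nlinarith
  have : (n : ℝ) < (d + 2 : ℕ) := by push_cast; linarith
  have : n < d + 2 := by exact_mod_cast this
  omega
lemma mem_nbrs' {F : Finset (Finset ℕ)} {x y : ℕ} :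
    y ∈ nbrs F x ↔ x ≠ y ∧ ∃ T ∈ F, x ∈ T ∧ y ∈ T := by
  simp only [nbrs, vertsOf, Finset.mem_filter, Finset.mem_biUnion, id]
  constructor
  · rintro ⟨_, h⟩; exact h
  · rintro ⟨h, T, h1, h2, h3⟩; exact ⟨⟨T, h1, h3⟩, h, T, h1, h2, h3⟩

lemma card_bound {F : Finset (Finset ℕ)} (hF : IsTriFam F) {n : ℕ} (hn1 : 1 ≤ n)
    (hd : ∀ e ∈ edgesOf F, n ≤ (F.filter fun T => e ⊆ T).card + 1) :
    (n + 1).choose 3 ≤ F.card := by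
  have hcod : ∀ x y, y ∈ nbrs F x → n - 1 ≤ (F.filter fun T => x ∈ T ∧ y ∈ T).card := by
    intro x y hy
    rw [mem_nbrs'] at hy
    obtain ⟨hxy, T, hT, hx, hy⟩ := hy
    have := hd {x, y} (by
      simp only [edgesOf, Finset.mem_biUnion, Finset.mem_powersetCard]
      exact ⟨T, hT, by intro z; simp; rintro (rfl | rfl) <;> assumption, Finset.card_pair hxy⟩)
    have h2 : (F.filter fun T => {x, y} ⊆ T) = (F.filter fun T => x ∈ T ∧ y ∈ T) := by
      ext T; simp [Finset.insert_subset_iff]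
    rw [h2] at this
    omega
  have hnb : ∀ x ∈ vertsOf F, n ≤ (nbrs F x).card := by
    intro x hx
    simp only [vertsOf, Finset.mem_biUnion, id] at hx
    obtain ⟨T, hT, hx⟩ := hx
    obtain ⟨y, hy, hyx⟩ := Finset.exists_mem_ne (by rw [hF.2 T hT]; norm_num) x
    have hyN : y ∈ nbrs F x := mem_nbrs'.2 ⟨hyx.symm, T, hT, hx, hy⟩
    have hsub : (F.filter fun T => x ∈ T ∧ y ∈ T) ⊆
        ((nbrs F x).erase y).image (fun z => {x, y, z}) := by
      intro S hS
      simp only [Finset.mem_filter] at hS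
      obtain ⟨hS, hxS, hyS⟩ := hS
      have hp : ({x, y} : Finset ℕ) ⊆ S := by
        intro z; simp; rintro (rfl | rfl) <;> assumption
      have hc2 : ({x, y} : Finset ℕ).card = 2 := Finset.card_pair hyx.symm
      obtain ⟨z, hz, hzn⟩ := Finset.exists_mem_notMem_of_card_lt_card
        (s := ({x, y} : Finset ℕ)) (t := S) (by rw [hF.2 S hS, hc2]; norm_num)
      simp only [Finset.mem_insert, Finset.mem_singleton, not_or] at hzn
      simp only [Finset.mem_image, Finset.mem_erase]
      refine ⟨z, ⟨hzn.2, mem_nbrs'.2 ⟨fun h => hzn.1 h.symm, S, hS, hxS, hz⟩⟩, ?_⟩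
      apply Finset.eq_of_subset_of_card_le
      · intro w; simp; rintro (rfl | rfl | rfl) <;> assumption
      · rw [hF.2 S hS, Finset.card_eq_three.2 ⟨x, y, z, hyx.symm, fun h => hzn.1 h.symm, fun h => hzn.2 h.symm, rfl⟩]
    have h1 := (Finset.card_le_card hsub).trans Finset.card_image_le
    have h2 := hcod x y hyN
    rw [Finset.card_erase_of_mem hyN] at h1
    have := Finset.card_pos.2 ⟨y, hyN⟩
    omega
  have hv : n + 1 ≤ (vertsOf F).card := by
    obtain ⟨T, hT⟩ := hF.1
    obtain ⟨x, hx⟩ := Finset.card_pos.1 (by rw [hF.2 T hT]; norm_num : 0 < T.card)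
    have hxV : x ∈ vertsOf F := by
      simp only [vertsOf, Finset.mem_biUnion, id]; exact ⟨T, hT, hx⟩
    have hs : nbrs F x ⊆ (vertsOf F).erase x := by
      intro y hy
      have h1 := (mem_nbrs'.1 hy).1
      exact Finset.mem_erase.2 ⟨h1.symm, (Finset.mem_filter.1 hy).1⟩
    have h1 := Finset.card_le_card hs
    rw [Finset.card_erase_of_mem hxV] at h1
    have := hnb x hxV
    have := Finset.card_pos.2 ⟨x, hxV⟩
    omega
  have hcount : ∑ x ∈ vertsOf F, ∑ y ∈ nbrs F x, (F.filter fun T => x ∈ T ∧ y ∈ T).card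
      ≤ 6 * F.card := by
    simp only [Finset.card_filter]
    rw [Finset.sum_congr rfl fun x _ => Finset.sum_comm, Finset.sum_comm,
      mul_comm, ← smul_eq_mul]
    refine Finset.sum_le_card_nsmul _ _ _ fun T hT => ?_
    have h1 : ∀ x, (∑ y ∈ nbrs F x, if x ∈ T ∧ y ∈ T then 1 else 0) ≤ if x ∈ T then 2 else 0 := by
      intro x
      split_ifs with hx
      · simp only [hx, true_and]
        rw [← Finset.card_filter]
        have : (nbrs F x).filter (fun y => y ∈ T) ⊆ T.erase x := by
          intro y hy
          rw [Finset.mem_filter] at hy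
          exact Finset.mem_erase.2 ⟨(mem_nbrs'.1 hy.1).1.symm, hy.2⟩
        have := Finset.card_le_card this
        rw [Finset.card_erase_of_mem hx, hF.2 T hT] at this
        exact this
      · simp [hx]
    refine (Finset.sum_le_sum fun x _ => h1 x).trans ?_
    rw [← Finset.sum_filter, Finset.sum_const, smul_eq_mul]
    have : (vertsOf F).filter (fun x => x ∈ T) ⊆ T := fun x hx => (Finset.mem_filter.1 hx).2
    have := Finset.card_le_card this
    rw [hF.2 T hT] at this
    omega
  have hlow : (n + 1) * (n * (n - 1)) ≤ ∑ x ∈ vertsOf F, ∑ y ∈ nbrs F x, (F.filter fun T => x ∈ T ∧ y ∈ T).card := by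
    have hi : ∀ x ∈ vertsOf F, n * (n - 1) ≤ ∑ y ∈ nbrs F x, (F.filter fun T => x ∈ T ∧ y ∈ T).card := by
      intro x hx
      refine le_trans (Nat.mul_le_mul_right _ (hnb x hx)) ?_
      rw [← smul_eq_mul]
      exact Finset.card_nsmul_le_sum _ _ _ fun y hy => hcod x y hy
    refine le_trans (Nat.mul_le_mul_right _ hv) ?_
    rw [← smul_eq_mul]
    exact Finset.card_nsmul_le_sum _ _ _ hi
  have hch : 6 * (n + 1).choose 3 = (n + 1) * (n * (n - 1)) := by
    have := Nat.descFactorial_eq_factorial_mul_choose (n + 1) 3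
    simp [Nat.descFactorial, Nat.factorial] at this
    rw [← this]; ring
  omega

lemma lam_le {F : Finset (Finset ℕ)} (hF : IsTriFam F) {n : ℕ} (hn1 : 1 ≤ n)
    (hc : F.card < (n + 1).choose 3) : lam F ≤ n := by
  by_contra hcon
  push Not at hcon
  have := card_bound hF hn1 fun e he => edge_deg hF hcon he
  omega
/-- The complete family on `n` vertices. -/
def KF (n : ℕ) : Finset (Finset ℕ) := (Finset.range n).powersetCard 3

lemma KF_fam {n : ℕ} (hn : 3 ≤ n) : IsTriFam (KF n) :=
  ⟨Finset.powersetCard_nonempty.2 (by simpa using hn), fun _ hT => (Finset.mem_powersetCard.1 hT).2⟩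

lemma tri_signs {x y z : ℕ} (h1 : x < y) (h2 : y < z) :
    triSign {x, y, z} {x, y} = 1 ∧ triSign {x, y, z} {y, z} = 1 ∧ triSign {x, y, z} {x, z} = -1 := by
  have c3 : ({x, y, z} : Finset ℕ).card = 3 :=
    Finset.card_eq_three.2 ⟨x, y, z, by omega, by omega, by omega, rfl⟩
  have d1 : ({x, y, z} : Finset ℕ) \ {x, y} = {z} := by ext w; simp; omega
  have d2 : ({x, y, z} : Finset ℕ) \ {y, z} = {x} := by ext w; simp; omega
  have d3 : ({x, y, z} : Finset ℕ) \ {x, z} = {y} := by ext w; simp; omega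
  have hmax : ({x, y, z} : Finset ℕ).max = z := by
    rw [Finset.max_insert, Finset.max_insert, Finset.max_singleton,
      max_eq_right (WithBot.coe_le_coe.2 h2.le)]
    exact max_eq_right (WithBot.coe_le_coe.2 (h1.trans h2).le)
  have hmin : ({x, y, z} : Finset ℕ).min = x := by
    rw [Finset.min_insert, Finset.min_insert, Finset.min_singleton,
      min_eq_left (WithTop.coe_le_coe.2 h2.le)]
    exact min_eq_left (WithTop.coe_le_coe.2 h1.le)
  refine ⟨?_, ?_, ?_⟩ <;> unfold triSign
  · rw [d1, hmax, hmin, c3, if_pos, if_pos]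
    · left; exact Finset.max_singleton
    · exact ⟨by intro w; simp; omega, Finset.card_pair (by omega), rfl⟩
  · rw [d2, hmax, hmin, c3, if_pos, if_pos]
    · right; exact Finset.min_singleton
    · exact ⟨by intro w; simp; omega, Finset.card_pair (by omega), rfl⟩
  · rw [d3, hmax, hmin, c3, if_pos, if_neg]
    · rw [Finset.max_singleton, Finset.min_singleton]
      rintro (h | h)
      · exact h2.ne (WithBot.coe_injective h)
      · exact h1.ne' (WithTop.coe_injective h)
    · exact ⟨by intro w; simp; omega, Finset.card_pair (by omega), rfl⟩

/-- Antisymmetric extension of an edge function. -/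
def asym (g : Finset ℕ → ℝ) (x y : ℕ) : ℝ :=
  if x < y then g {x, y} else if y < x then - g {x, y} else 0

/-- Coboundary of the antisymmetric extension. -/
def cob (g : Finset ℕ → ℝ) (x y z : ℕ) : ℝ := asym g y z - asym g x z + asym g x y

lemma asym_swap (g : Finset ℕ → ℝ) (x y : ℕ) : asym g y x = - asym g x y := by
  unfold asym
  rw [Finset.pair_comm y x]
  split_ifs <;> first | omega | simp

lemma cob_cocycle (g : Finset ℕ → ℝ) (x y z w : ℕ) :
    cob g y z w - cob g x z w + cob g x y w = cob g x y z := by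
  unfold cob; ring

/-- The row sum of the incidence matrix. -/
lemma delta_row {F : Finset (Finset ℕ)} (g : Finset ℕ → ℝ) {x y z : ℕ} (h1 : x < y) (h2 : y < z)
    (hT : ({x, y, z} : Finset ℕ) ∈ F) :
    ∑ e ∈ edgesOf F, triSign {x, y, z} e * g e = cob g x y z := by
  have c3 : ({x, y, z} : Finset ℕ).card = 3 :=
    Finset.card_eq_three.2 ⟨x, y, z, by omega, by omega, by omega, rfl⟩
  have hp : ({x, y, z} : Finset ℕ).powersetCard 2 = {{x, y}, {x, z}, {y, z}} := by
    symm
    apply Finset.eq_of_subset_of_card_le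
    · intro e he
      simp only [Finset.mem_insert, Finset.mem_singleton] at he
      rw [Finset.mem_powersetCard]
      rcases he with rfl | rfl | rfl
      · exact ⟨by intro w; simp; omega, Finset.card_pair (by omega)⟩
      · exact ⟨by intro w; simp; omega, Finset.card_pair (by omega)⟩
      · exact ⟨by intro w; simp; omega, Finset.card_pair (by omega)⟩
    · rw [Finset.card_powersetCard, c3]
      refine (Finset.card_eq_three (s := ({{x, y}, {x, z}, {y, z}} : Finset (Finset ℕ))).2
        ⟨{x, y}, {x, z}, {y, z}, ?_, ?_, ?_, rfl⟩).ge
      · intro h; have := Finset.ext_iff.1 h y; simp at this; omega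
      · intro h; have := Finset.ext_iff.1 h x; simp at this; omega
      · intro h; have := Finset.ext_iff.1 h x; simp at this; omega
  have hsub : ({x, y, z} : Finset ℕ).powersetCard 2 ⊆ edgesOf F := by
    intro e he
    exact Finset.mem_biUnion.2 ⟨_, hT, he⟩
  rw [← Finset.sum_subset hsub]
  · rw [hp, Finset.sum_insert, Finset.sum_insert, Finset.sum_singleton]
    · obtain ⟨s1, s2, s3⟩ := tri_signs h1 h2
      rw [s1, s2, s3]
      simp only [cob, asym, h1, h2, h1.trans h2, if_true]
      ring
    · simp only [Finset.mem_singleton]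
      intro h; have := Finset.ext_iff.1 h x; simp at this; omega
    · simp only [Finset.mem_insert, Finset.mem_singleton, not_or]
      constructor
      · intro h; have := Finset.ext_iff.1 h y; simp at this; omega
      · intro h; have := Finset.ext_iff.1 h x; simp at this; omega
  · intro e he hne
    rw [Finset.mem_powersetCard] at hne
    have : ¬ (e ⊆ {x, y, z}) := fun h => hne ⟨h, card_of_edge he⟩
    simp [triSign, this]

lemma signed_row {F : Finset (Finset ℕ)} (g : Finset ℕ → ℝ) {x y w : ℕ} (h1 : x < y)
    (hw : w ≠ x) (hw' : w ≠ y) (hT : ({x, y, w} : Finset ℕ) ∈ F) :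
    triSign {x, y, w} {x, y} * ∑ e ∈ edgesOf F, triSign {x, y, w} e * g e = cob g x y w := by
  rcases lt_trichotomy w x with h | h | h
  · have e1 : ({x, y, w} : Finset ℕ) = {w, x, y} := by ext; simp; tauto
    rw [e1] at hT ⊢
    rw [delta_row g h h1 hT, (tri_signs h h1).2.1]
    simp only [cob, asym_swap g w x, asym_swap g w y]; ring
  · exact absurd h hw
  · rcases lt_trichotomy w y with h' | h' | h'
    · have e1 : ({x, y, w} : Finset ℕ) = {x, w, y} := by ext; simp; tauto
      rw [e1] at hT ⊢
      rw [delta_row g h h' hT, (tri_signs h h').2.2]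
      simp only [cob, asym_swap g w y]; ring
    · exact absurd h' hw'
    · rw [delta_row g h1 h' hT, (tri_signs h1 h').1]; ring

lemma col_sum {n : ℕ} (g : Finset ℕ → ℝ) {x y : ℕ} (h1 : x < y) (hy : y < n) :
    ∑ T ∈ KF n, triSign T {x, y} * ∑ e ∈ edgesOf (KF n), triSign T e * g e =
      ∑ w ∈ Finset.range n, cob g x y w := by
  have hz : ∑ w ∈ Finset.range n, cob g x y w
      = ∑ w ∈ ((Finset.range n).erase x).erase y, cob g x y w := by
    symm
    apply Finset.sum_subset
    · exact (Finset.erase_subset _ _).trans (Finset.erase_subset _ _)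
    · intro w hw hn
      have : w = x ∨ w = y := by
        simp only [Finset.mem_erase, not_and] at hn
        by_contra hc; push Not at hc; exact hn hc.2 hc.1 hw
      rcases this with rfl | rfl
      · have := asym_swap g w w
        simp only [cob, asym_swap g w y]; linarith
      · have := asym_swap g w w
        simp only [cob]; linarith
  have hmem : ∀ w ∈ ((Finset.range n).erase x).erase y, ({x, y, w} : Finset ℕ) ∈ KF n := by
    intro w hw
    simp only [Finset.mem_erase, Finset.mem_range] at hw
    refine Finset.mem_powersetCard.2 ⟨?_, Finset.card_eq_three.2
      ⟨x, y, w, by omega, by omega, by omega, rfl⟩⟩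
    intro u; simp; omega
  have hinj : Set.InjOn (fun w => ({x, y, w} : Finset ℕ)) (((Finset.range n).erase x).erase y) := by
    intro a ha b hb hab
    simp only [Finset.coe_erase, Set.mem_sdiff, Set.mem_singleton_iff, Finset.mem_coe] at ha
    have := (Finset.ext_iff.1 hab a).1 (by simp)
    simp only [Finset.mem_insert, Finset.mem_singleton] at this
    tauto
  rw [hz, ← Finset.sum_subset (s₁ := (((Finset.range n).erase x).erase y).image
    (fun w => ({x, y, w} : Finset ℕ))), Finset.sum_image hinj]
  · refine Finset.sum_congr rfl fun w hw => ?_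
    have hw' := hw
    simp only [Finset.mem_erase] at hw'
    exact signed_row g h1 hw'.2.1 hw'.1 (hmem w hw)
  · intro T hT
    obtain ⟨w, hw, rfl⟩ := Finset.mem_image.1 hT
    exact hmem w hw
  · intro T hT hn
    have : ¬ (({x, y} : Finset ℕ) ⊆ T) := by
      intro hs
      apply hn
      obtain ⟨hTr, hTc⟩ := Finset.mem_powersetCard.1 hT
      have hc2 : ({x, y} : Finset ℕ).card = 2 := Finset.card_pair h1.ne
      obtain ⟨z, hz, hzn⟩ := Finset.exists_mem_notMem_of_card_lt_card
        (s := ({x, y} : Finset ℕ)) (t := T) (by rw [hTc, hc2]; norm_num)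
      simp only [Finset.mem_insert, Finset.mem_singleton, not_or] at hzn
      refine Finset.mem_image.2 ⟨z, ?_, ?_⟩
      · simp only [Finset.mem_erase]; exact ⟨hzn.2, hzn.1, hTr hz⟩
      · apply Finset.eq_of_subset_of_card_le
        · intro w hw
          simp only [Finset.mem_insert, Finset.mem_singleton] at hw
          rcases hw with rfl | rfl | rfl
          · exact hs (by simp)
          · exact hs (by simp)
          · exact hz
        · rw [hTc, Finset.card_eq_three.2 ⟨x, y, z, h1.ne, fun h => hzn.1 h.symm,
            fun h => hzn.2 h.symm, rfl⟩]
    simp [triSign, this]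

lemma pair_mem_edges {n x y : ℕ} (hn : 3 ≤ n) (h1 : x < y) (hy : y < n) : ({x, y} : Finset ℕ) ∈ edgesOf (KF n) := by
  have hc2 : ({x, y} : Finset ℕ).card = 2 := Finset.card_pair h1.ne
  obtain ⟨z, hz, hzn⟩ := Finset.exists_mem_notMem_of_card_lt_card
    (s := ({x, y} : Finset ℕ)) (t := Finset.range n) (by rw [hc2]; simp; omega)
  simp only [Finset.mem_insert, Finset.mem_singleton, not_or, Finset.mem_range] at hzn hz
  refine Finset.mem_biUnion.2 ⟨{x, y, z}, Finset.mem_powersetCard.2 ⟨?_, ?_⟩,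
    Finset.mem_powersetCard.2 ⟨?_, hc2⟩⟩
  · intro u; simp; omega
  · exact Finset.card_eq_three.2 ⟨x, y, z, by omega, by omega, by omega, rfl⟩
  · intro u; simp; omega

lemma edge_pair {n : ℕ} {e : Finset ℕ} (he : e ∈ edgesOf (KF n)) :
    ∃ x y, x < y ∧ y < n ∧ e = {x, y} := by
  obtain ⟨T, hT, heT⟩ := Finset.mem_biUnion.1 he
  obtain ⟨hs, hc⟩ := Finset.mem_powersetCard.1 heT
  obtain ⟨hTr, _⟩ := Finset.mem_powersetCard.1 hT
  obtain ⟨a, b, hab, rfl⟩ := Finset.card_eq_two.1 hc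
  have ha : a < n := Finset.mem_range.1 (hTr (hs (by simp)))
  have hb : b < n := Finset.mem_range.1 (hTr (hs (by simp)))
  rcases lt_or_gt_of_ne hab with h | h
  · exact ⟨a, b, h, hb, rfl⟩
  · exact ⟨b, a, h, ha, Finset.pair_comm _ _⟩

/-- Every positive eigenvalue of the complete family is `n`. -/
lemma eig_K {n : ℕ} (hn : 3 ≤ n) {μ : ℝ} (hμ : 0 < μ) {v : {e // e ∈ edgesOf (KF n)} → ℝ}
    (hv : v ≠ 0) (h : ((delta1 (KF n))ᵀ * delta1 (KF n)).mulVec v = μ • v) : μ = n := by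
  set g : Finset ℕ → ℝ := fun e => if he : e ∈ edgesOf (KF n) then v ⟨e, he⟩ else 0 with hg
  have hgv : ∀ e : {e // e ∈ edgesOf (KF n)}, g e.1 = v e := fun e => by simp [hg]
  have hlt : ∀ x y, x < y → y < n → ∑ w ∈ Finset.range n, cob g x y w = μ * asym g x y := by
    intro x y hxy hy
    rw [← col_sum g hxy hy]
    have he := pair_mem_edges hn hxy hy
    have h' := congrFun h ⟨_, he⟩
    rw [← Matrix.mulVec_mulVec] at h'
    simp only [Pi.smul_apply, smul_eq_mul, ← hgv] at h'
    simp only [asym, hxy, if_true]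
    rw [← h']
    simp only [Matrix.mulVec, dotProduct, Matrix.transpose_apply, delta1, Matrix.of_apply, ← hgv]
    rw [← Finset.sum_attach (KF n), Finset.univ_eq_attach]
    refine Finset.sum_congr rfl fun T _ => ?_
    rw [← Finset.sum_attach (edgesOf (KF n)), Finset.univ_eq_attach]
  have hall : ∀ x y, x < n → y < n → ∑ w ∈ Finset.range n, cob g x y w = μ * asym g x y := by
    intro x y hx hy
    have hsw : ∀ w, cob g x y w = - cob g y x w := fun w => by
      simp only [cob, asym_swap g x y]; ring
    rcases lt_trichotomy x y with hxy | rfl | hxy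
    · exact hlt x y hxy hy
    · have h0 : asym g x x = 0 := by simp [asym]
      simp [cob, h0]
    · rw [Finset.sum_congr rfl fun w _ => hsw w, Finset.sum_neg_distrib, hlt y x hxy hx,
        asym_swap g y x]; ring
  have hb : ∀ x y z, x < n → y < n → z < n → (n : ℝ) * cob g x y z = μ * cob g x y z := by
    intro x y z hx hy hz
    have h1 : (n : ℝ) * cob g x y z = ∑ w ∈ Finset.range n, cob g x y z := by simp
    rw [h1, ← Finset.sum_congr rfl fun w _ => cob_cocycle g x y z w, Finset.sum_add_distrib,
      Finset.sum_sub_distrib, hall _ _ hy hz, hall _ _ hx hz, hall _ _ hx hy]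
    simp only [cob]; ring
  by_contra hne
  apply hv
  ext e
  obtain ⟨x, y, hxy, hy, he⟩ := edge_pair e.2
  have hz : ∀ w ∈ Finset.range n, cob g x y w = 0 := by
    intro w hw
    have := hb x y w (hxy.trans hy) hy (Finset.mem_range.1 hw)
    by_contra h0
    exact hne (mul_right_cancel₀ h0 this).symm
  have := hlt x y hxy hy
  rw [Finset.sum_eq_zero hz] at this
  simp only [asym, hxy, if_true] at this
  rw [← hgv, he]
  rcases mul_eq_zero.1 this.symm with h | h
  · exact absurd h hμ.ne'
  · simpa using h

lemma lam_K {n : ℕ} (hn : 3 ≤ n) : lam (KF n) = n := by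
  have he := pair_mem_edges hn (x := 0) (y := 1) (by omega) (by omega)
  have hpos : 0 < ((delta1 (KF n))ᵀ * delta1 (KF n)) ⟨_, he⟩ ⟨_, he⟩ := by
    rw [M_diag (KF_fam hn)]
    have : 0 < ((KF n).filter fun T => ({0, 1} : Finset ℕ) ⊆ T).card := by
      rw [Finset.card_pos]
      obtain ⟨T, hT, heT⟩ := Finset.mem_biUnion.1 he
      exact ⟨T, Finset.mem_filter.2 ⟨hT, (Finset.mem_powersetCard.1 heT).1⟩⟩
    exact_mod_cast this
  obtain ⟨μ, hμ, v, hv, h⟩ := exists_pos_eig _ _ hpos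
  have : {μ : ℝ | 0 < μ ∧ ∃ v : {e // e ∈ edgesOf (KF n)} → ℝ, v ≠ 0 ∧
      ((delta1 (KF n))ᵀ * delta1 (KF n)).mulVec v = μ • v} = {(n : ℝ)} := by
    ext ν
    constructor
    · rintro ⟨h1, w, hw, h2⟩; exact eig_K hn h1 hw h2
    · rintro rfl
      rw [← eig_K hn hμ hv h]
      exact ⟨hμ, v, hv, h⟩
  unfold lam lambdaMinPos
  rw [this, csInf_singleton]

lemma Lam_eq {t n : ℕ} (hn : 3 ≤ n) (h1 : n.choose 3 ≤ t) (h2 : t < (n + 1).choose 3) :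
    Lam t = n := by
  have hb : ∀ s ≤ t, ∀ r ∈ {r : ℝ | ∃ F : Finset (Finset ℕ), IsTriFam F ∧ F.card = s ∧ lam F = r},
      r ≤ n := by
    rintro s hs r ⟨F, hF, hc, rfl⟩
    exact lam_le hF (by omega) (by omega)
  have hphi : ∀ s ≤ t, phi s ≤ n := fun s hs => Real.sSup_le (hb s hs) (by positivity)
  have hK : (n : ℝ) ≤ phi (n.choose 3) :=
    le_csSup ⟨n, hb _ h1⟩ ⟨KF n, KF_fam hn, by simp [KF], lam_K hn⟩
  have hub : ∀ r ∈ {r : ℝ | ∃ s : ℕ, 1 ≤ s ∧ s ≤ t ∧ phi s = r}, r ≤ n := by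
    rintro r ⟨s, _, hs, rfl⟩; exact hphi s hs
  apply le_antisymm
  · exact Real.sSup_le hub (by positivity)
  · exact hK.trans (le_csSup ⟨n, hub⟩ ⟨_, Nat.choose_pos hn, h1, rfl⟩)

/-- Exact staircase formula: for `t ≥ 3`, `Λ(t) = max{ n ∈ ℕ : C(n,3) ≤ t }`;
equivalently, if `C(n,3) ≤ t < C(n+1,3)` with `n ≥ 3`, then `Λ(t) = n`. -/
theorem stmt8 (t : ℕ) (ht : 3 ≤ t) :
    Lam t = ((sSup {n : ℕ | n.choose 3 ≤ t} : ℕ) : ℝ) ∧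
    (∀ n : ℕ, 3 ≤ n → n.choose 3 ≤ t → t < (n + 1).choose 3 → Lam t = (n : ℝ)) := by
  refine ⟨?_, fun n hn h1 h2 => Lam_eq hn h1 h2⟩
  have hbd : BddAbove {n : ℕ | n.choose 3 ≤ t} := by
    refine ⟨t + 3, fun n hn => ?_⟩
    by_contra hc
    push Not at hc
    have h1 : (t + 4).choose 3 ≤ n.choose 3 := Nat.choose_le_choose 3 hc
    have h2 : (t + 4).choose 3 = (t + 3).choose 2 + (t + 3).choose 3 := Nat.choose_succ_succ _ _
    have h3 : (t + 3).choose 2 = (t + 2).choose 1 + (t + 2).choose 2 := Nat.choose_succ_succ _ _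
    have h4 := Nat.choose_one_right (t + 2)
    have : n.choose 3 ≤ t := hn
    omega
  have hmem : sSup {n : ℕ | n.choose 3 ≤ t} ∈ {n : ℕ | n.choose 3 ≤ t} :=
    Nat.sSup_mem ⟨0, by simp⟩ hbd
  refine Lam_eq (le_csSup hbd ?_) hmem ?_
  · simp; omega
  · by_contra hc
    push Not at hc
    have := le_csSup hbd (show _ ∈ {n : ℕ | n.choose 3 ≤ t} from hc)
    omega
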